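/- Controllability of the double integrator: for every u_max > 0 and every boundary data s₀, v₀, s_f, v_f ∈ ℝ, there exists a feasible transfer time T ≥ 0; that is, there exist T ≥ 0 and a twice-differentiable function s : ℝ → ℝ with s(0) = s₀, s'(0) = v₀, s(T) = s_f, s'(T) = v_f, and |s''(t)| ≤ u_max for all t ∈ [0,T]. -/

import Mathlib

/-!
The cubic Hermite interpolant of the boundary data on `[0, T]` meets all four boundary
conditions, and its acceleration at `t = T x` is
`((sf - s₀) / T * (6 - 12 x) + v₀ (6 x - 4) + vf (6 x - 2)) / T`.
For `T ≥ 1` this is at most `(6 |sf - s₀| + 4 |v₀| + 4 |vf|) / T` in absolute value,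
so every sufficiently large `T` is feasible.
-/

open Set

/-- `T` is a feasible transfer time for the input-constrained double integrator
with acceleration bound `umax` and boundary data `(s₀, v₀) → (s_f, v_f)`:
`T ≥ 0` and there is a position trajectory `s`, twice differentiable on
`[0, T]` (with velocity `v` and acceleration `a`), matching the boundary
conditions and satisfying `|s''(t)| ≤ umax` on `[0, T]`. -/
def FeasibleTime (umax s₀ v₀ sf vf T : ℝ) : Prop :=
  0 ≤ T ∧ ∃ s v a : ℝ → ℝ,
    (∀ t ∈ Icc (0 : ℝ) T, HasDerivWithinAt s (v t) (Icc (0 : ℝ) T) t) ∧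
    (∀ t ∈ Icc (0 : ℝ) T, HasDerivWithinAt v (a t) (Icc (0 : ℝ) T) t) ∧
    s 0 = s₀ ∧ v 0 = v₀ ∧ s T = sf ∧ v T = vf ∧
    (∀ t ∈ Icc (0 : ℝ) T, |a t| ≤ umax)

/-- The minimum time `T_d*` of the input-constrained double integrator: the
infimum of the set of feasible transfer times. -/
noncomputable def minTime (umax s₀ v₀ sf vf : ℝ) : ℝ :=
  sInf {T : ℝ | FeasibleTime umax s₀ v₀ sf vf T}


/-- **Controllability of the double integrator.** For every acceleration bound
`umax > 0` and every boundary data `s₀, v₀, s_f, v_f ∈ ℝ`, there exists a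
feasible transfer time `T ≥ 0`: a `T ≥ 0` together with a twice-differentiable
trajectory `s` with `s 0 = s₀`, `s' 0 = v₀`, `s T = s_f`, `s' T = v_f` and
`|s''(t)| ≤ umax` on `[0, T]`. -/
theorem double_integrator_controllable (umax s₀ v₀ sf vf : ℝ) (humax : 0 < umax) :
    ∃ T : ℝ, FeasibleTime umax s₀ v₀ sf vf T := by
  obtain ⟨T, hT1, hTC⟩ : ∃ T : ℝ, 1 ≤ T ∧ 6 * |sf - s₀| + 4 * |v₀| + 4 * |vf| ≤ umax * T := by
    refine ⟨1 + (6 * |sf - s₀| + 4 * |v₀| + 4 * |vf|) / umax, ?_, ?_⟩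
    · have : 0 ≤ (6 * |sf - s₀| + 4 * |v₀| + 4 * |vf|) / umax := by positivity
      linarith
    · rw [mul_add, mul_div_cancel₀ _ humax.ne']
      linarith
  have hT : 0 < T := by linarith
  -- `p + q t` is the second derivative of the Hermite cubic.
  set p : ℝ := 6 * (sf - s₀) / T ^ 2 - (4 * v₀ + 2 * vf) / T with hp
  set q : ℝ := -12 * (sf - s₀) / T ^ 3 + 6 * (v₀ + vf) / T ^ 2 with hq
  refine ⟨T, hT.le, fun t => s₀ + v₀ * t + p / 2 * t ^ 2 + q / 6 * t ^ 3,
    fun t => v₀ + p * t + q / 2 * t ^ 2, fun t => p + q * t, ?_, ?_, by simp, by simp, ?_, ?_, ?_⟩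
  · intro t _
    apply HasDerivAt.hasDerivWithinAt
    have h := ((((hasDerivAt_id' t).const_mul v₀).const_add s₀).add
      ((hasDerivAt_pow 2 t).const_mul (p / 2))).add ((hasDerivAt_pow 3 t).const_mul (q / 6))
    refine h.congr_deriv ?_
    norm_num
    ring
  · intro t _
    apply HasDerivAt.hasDerivWithinAt
    have h := (((hasDerivAt_id' t).const_mul p).const_add v₀).add
      ((hasDerivAt_pow 2 t).const_mul (q / 2))
    refine h.congr_deriv ?_
    norm_num
    ring
  · simp only [hp, hq]
    field_simp
    ring
  · simp only [hp, hq]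
    field_simp
    ring
  · rintro t ⟨ht0, htT⟩
    obtain ⟨x, rfl⟩ : ∃ x, t = T * x := ⟨t / T, by field_simp⟩
    have hx0 : 0 ≤ x := nonneg_of_mul_nonneg_right ht0 hT
    have hx1 : x ≤ 1 := by
      by_contra! h
      nlinarith
    have hform : p + q * (T * x) =
        ((sf - s₀) / T * (6 - 12 * x) + v₀ * (6 * x - 4) + vf * (6 * x - 2)) / T := by
      simp only [hp, hq]
      field_simp
      ring
    have hs : |(sf - s₀) / T * (6 - 12 * x)| ≤ |sf - s₀| * 6 := by
      rw [abs_mul, abs_div, abs_of_pos hT]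
      exact mul_le_mul (div_le_self (abs_nonneg _) hT1)
        (abs_le.2 ⟨by linarith, by linarith⟩) (abs_nonneg _) (abs_nonneg _)
    have hv : |v₀ * (6 * x - 4)| ≤ |v₀| * 4 := by
      rw [abs_mul]
      exact mul_le_mul_of_nonneg_left (abs_le.2 ⟨by linarith, by linarith⟩) (abs_nonneg _)
    have hw : |vf * (6 * x - 2)| ≤ |vf| * 4 := by
      rw [abs_mul]
      exact mul_le_mul_of_nonneg_left (abs_le.2 ⟨by linarith, by linarith⟩) (abs_nonneg _)
    show |p + q * (T * x)| ≤ umax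
    rw [hform, abs_div, abs_of_pos hT, div_le_iff₀ hT]
    linarith [abs_add_three ((sf - s₀) / T * (6 - 12 * x)) (v₀ * (6 * x - 4)) (vf * (6 * x - 2))]
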